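/- The Riccati-type inner equation dη̄/dū = 1/(η̄ + ū²) has a unique solution η̄₀(ū) defined on an interval (−∞, ū₁) that approaches the parabola η̄ = −ū² as ū → −∞; more precisely there is a unique solution satisfying η̄₀(ū) + ū² → 0 as ū → −∞, and it has the asymptotic expansion η̄₀(ū) = −ū² − 1/(2ū) − 1/(8ū⁴) + O(1/ū⁷) as ū → −∞. -/

import Mathlib

open Set Filter Topology

/-!
Above the parabola the right-hand side `1 / (η + u²)` decreases in `η`, so the distance between two
solutions does not grow with `u`. Two solutions asymptotic to the parabola have distance tending to
`0` at `-∞`, hence coincide. For existence, the curves `-u² - 1/(2u) - 1/(8u⁴) - c/u⁷` with `c = 0`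
and `c = 1` are a strict lower and a strict upper fence on `(-∞, -1]`. Solutions entering the funnel
between them at `-1 - n` stay in it, and since its width tends to `0` at `-∞`, they converge locally
uniformly as `n → ∞` to a solution that lies in the funnel on all of `(-∞, -1)`; this also gives the
expansion. Every solution on a half-line `(-∞, b)` with `b ≤ 0` lies above the parabola: it cannot
reach the parabola, because its slope would blow up, and it cannot stay below, because there it
decreases, so it is bounded below near `-∞`, where the parabola is not.
-/

section UniformLimits

variable {X E : Type*} {F : ℕ → X → E}

lemma uniformCauchySeqOn_of_dist_le_tendsto_zero [PseudoMetricSpace E] {s : Set X}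
    {δ : ℕ → ℝ} {N : ℕ}
    (hF : ∀ n m, N ≤ n → n ≤ m → ∀ x ∈ s, dist (F n x) (F m x) ≤ δ n)
    (hδ : Tendsto δ atTop (𝓝 0)) : UniformCauchySeqOn F atTop s := by
  rw [Metric.uniformCauchySeqOn_iff]
  intro ε hε
  obtain ⟨M, hMδ, hNM⟩ :=
    ((hδ.eventually_lt_const (half_pos hε)).and (eventually_ge_atTop N)).exists
  refine ⟨M, fun m hm n hn x hx => ?_⟩
  calc dist (F m x) (F n x) ≤ dist (F M x) (F m x) + dist (F M x) (F n x) :=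
        dist_triangle_left _ _ _
    _ ≤ δ M + δ M := add_le_add (hF M m hNM hm x hx) (hF M n hNM hn x hx)
    _ < ε := by linarith

lemma exists_forall_tendstoUniformlyOn_of_uniformCauchySeqOn [UniformSpace E] [CompleteSpace E]
    {ι : Type*} {S : ι → Set X} (hF : ∀ i, UniformCauchySeqOn F atTop (S i)) :
    ∃ g : X → E, ∀ i, TendstoUniformlyOn F g atTop (S i) := by
  have pointwise : ∀ x, ∃ l, ∀ i, x ∈ S i → Tendsto (fun n => F n x) atTop (𝓝 l) := by
    intro x
    by_cases hx : ∃ i, x ∈ S i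
    · obtain ⟨i, hi⟩ := hx
      obtain ⟨l, hl⟩ := cauchySeq_tendsto_of_complete ((hF i).cauchySeq hi)
      exact ⟨l, fun _ _ => hl⟩
    · exact ⟨F 0 x, fun i hi => (hx ⟨i, hi⟩).elim⟩
  choose g hg using pointwise
  exact ⟨g, fun i => (hF i).tendstoUniformlyOn_of_tendsto fun x hx => hg x i hx⟩

end UniformLimits

section VectorValued

variable {E : Type*} [NormedAddCommGroup E] [NormedSpace ℝ E] {f : ℝ → E → E}

lemma exists_isIntegralCurveOn_Icc_of_lipschitzWith_of_norm_le [CompleteSpace E] {a b : ℝ}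
    (hab : a ≤ b) {K : NNReal} {L : ℝ} (hlip : ∀ t ∈ Icc a b, LipschitzWith K (f t))
    (hcont : ∀ x, ContinuousOn (f · x) (Icc a b)) (hL : ∀ t ∈ Icc a b, ∀ x, ‖f t x‖ ≤ L) (x₀ : E) :
    ∃ γ : ℝ → E, γ a = x₀ ∧ IsIntegralCurveOn γ f (Icc a b) := by
  have hL₀ : 0 ≤ L := (norm_nonneg _).trans (hL a ⟨le_rfl, hab⟩ x₀)
  lift L to NNReal using hL₀
  have hPL : IsPicardLindelof f (⟨a, le_rfl, hab⟩ : Icc a b) x₀ (L * (b - a).toNNReal) 0 L K :=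
    { lipschitzOnWith := fun t ht => (hlip t ht).lipschitzOnWith
      continuousOn := fun x _ => hcont x
      norm_le := fun t ht x _ => hL t ht x
      mul_max_le := by simp [hab] }
  exact hPL.exists_eq_forall_mem_Icc_hasDerivWithinAt₀

lemma hasDerivAt_of_tendstoUniformlyOn_of_lipschitzOnWith {ι : Type*} {l : Filter ι} [NeBot l]
    {S : ℝ → Set E} {U : Set ℝ} (hU : IsOpen U) {K : NNReal}
    (hlip : ∀ t ∈ U, LipschitzOnWith K (f t) (S t)) {γ : ι → ℝ → E} {γ₀ : ℝ → E}
    (hγ : ∀ᶠ i in l, IsIntegralCurveOn (γ i) f U ∧ ∀ t ∈ U, γ i t ∈ S t)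
    (hγ₀ : ∀ t ∈ U, γ₀ t ∈ S t) (hlim : TendstoUniformlyOn γ γ₀ l U) {t : ℝ} (ht : t ∈ U) :
    HasDerivAt γ₀ (f t (γ₀ t)) t := by
  have deriv_lim : TendstoUniformlyOn (fun i t => f t (γ i t)) (fun t => f t (γ₀ t)) l U := by
    rw [Metric.tendstoUniformlyOn_iff] at hlim ⊢
    intro ε hε
    have hK : (0 : ℝ) < K + 1 := by positivity
    filter_upwards [hγ, hlim (ε / (K + 1)) (by positivity)] with i hi hdist s hs
    calc dist (f s (γ₀ s)) (f s (γ i s)) ≤ K * dist (γ₀ s) (γ i s) :=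
          (hlip s hs).dist_le_mul _ (hγ₀ s hs) _ (hi.2 s hs)
      _ ≤ (K + 1) * dist (γ₀ s) (γ i s) := by gcongr; linarith
      _ < ε := (lt_div_iff₀' hK).1 (hdist s hs)
  exact hasDerivAt_of_tendstoUniformlyOn hU deriv_lim
    (hγ.mono fun i hi s hs => (hi.1 s hs).hasDerivAt (hU.mem_nhds hs))
    (fun s hs => hlim.tendsto_at hs) ht

end VectorValued

section Dissipative

variable {f : ℝ → ℝ → ℝ} {S : ℝ → Set ℝ} {v w : ℝ → ℝ}

lemma antitoneOn_abs_sub_of_isIntegralCurveOn {D : Set ℝ} (hD : Convex ℝ D)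
    (hf : ∀ t ∈ D, AntitoneOn (f t) (S t))
    (hv : IsIntegralCurveOn v f D) (hvS : ∀ t ∈ D, v t ∈ S t)
    (hw : IsIntegralCurveOn w f D) (hwS : ∀ t ∈ D, w t ∈ S t) :
    AntitoneOn (fun t => |v t - w t|) D := by
  have deriv_sq : ∀ t ∈ D, HasDerivWithinAt (fun t => (v t - w t) ^ 2)
      (2 * ((v t - w t) * (f t (v t) - f t (w t)))) D t := fun t ht =>
    (((hv t ht).fun_sub (hw t ht)).fun_pow 2).congr_deriv (by push_cast; ring)
  have deriv_nonpos : ∀ t ∈ D, 2 * ((v t - w t) * (f t (v t) - f t (w t))) ≤ 0 := by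
    intro t ht
    suffices (v t - w t) * (f t (v t) - f t (w t)) ≤ 0 by linarith
    rcases le_total (v t) (w t) with h | h
    · exact mul_nonpos_of_nonpos_of_nonneg (sub_nonpos.2 h)
        (sub_nonneg.2 (hf t ht (hvS t ht) (hwS t ht) h))
    · exact mul_nonpos_of_nonneg_of_nonpos (sub_nonneg.2 h)
        (sub_nonpos.2 (hf t ht (hwS t ht) (hvS t ht) h))
  have sq_antitone : AntitoneOn (fun t => (v t - w t) ^ 2) D :=
    antitoneOn_of_hasDerivWithinAt_nonpos hD (fun t ht => (deriv_sq t ht).continuousWithinAt)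
      (fun t ht => (deriv_sq t (interior_subset ht)).mono interior_subset)
      fun t ht => deriv_nonpos t (interior_subset ht)
  exact fun s hs t ht hst => sq_le_sq.1 (sq_antitone hs ht hst)

lemma eqOn_Iio_of_isIntegralCurveOn_of_tendsto_sub {b : ℝ}
    (hf : ∀ t < b, AntitoneOn (f t) (S t))
    (hv : IsIntegralCurveOn v f (Iio b)) (hvS : ∀ t < b, v t ∈ S t)
    (hw : IsIntegralCurveOn w f (Iio b)) (hwS : ∀ t < b, w t ∈ S t)
    (hvw : Tendsto (fun t => v t - w t) atBot (𝓝 0)) : EqOn v w (Iio b) := by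
  intro t ht
  have hanti := antitoneOn_abs_sub_of_isIntegralCurveOn (convex_Iio b) hf hv hvS hw hwS
  have habs : |v t - w t| ≤ |(0 : ℝ)| := ge_of_tendsto hvw.abs <| by
    filter_upwards [eventually_le_atBot t] with s hs
    exact hanti (hs.trans_lt ht) ht hs
  rwa [abs_zero, abs_nonpos_iff, sub_eq_zero] at habs

end Dissipative

/-- The part of the graph strip `{(t, x) | α t ≤ x ≤ β t}` lying over `s`. -/
def stripOver (α β : ℝ → ℝ) (s : Set ℝ) : Set (ℝ × ℝ) :=
  {p | p.1 ∈ s ∧ p.2 ∈ Icc (α p.1) (β p.1)}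

/-- The field `f` with its space variable clamped to `[α t, β t]`: it agrees with `f` on the strip
between `α` and `β`, and inherits global bounds from bounds on that strip. -/
def clampedField (f : ℝ → ℝ → ℝ) (α β : ℝ → ℝ) (t x : ℝ) : ℝ :=
  f t (max (α t) (min x (β t)))

section ClampedField

variable {f : ℝ → ℝ → ℝ} {α β : ℝ → ℝ} {K : NNReal} {t : ℝ}

lemma max_min_mem_Icc {R : Type*} [LinearOrder R] {a b : R} (hab : a ≤ b) (x : R) :
    max a (min x b) ∈ Icc a b :=
  ⟨le_max_left _ _, max_le hab (min_le_right _ _)⟩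

lemma clampedField_of_mem_Icc {x : ℝ} (hx : x ∈ Icc (α t) (β t)) :
    clampedField f α β t x = f t x := by
  rw [clampedField, min_eq_left hx.2, max_eq_right hx.1]

lemma lipschitzWith_clampedField (hle : α t ≤ β t)
    (hlip : LipschitzOnWith K (f t) (Icc (α t) (β t))) :
    LipschitzWith K (clampedField f α β t) := by
  have hclamp : LipschitzWith 1 fun x : ℝ => max (α t) (min x (β t)) :=
    (LipschitzWith.id.min_const _).const_max _
  rw [← lipschitzOnWith_univ, ← mul_one K]
  exact hlip.comp hclamp.lipschitzOnWith fun x _ => max_min_mem_Icc hle x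

variable {s : Set ℝ}

lemma continuousOn_clampedField (hle : ∀ t ∈ s, α t ≤ β t) (hα : ContinuousOn α s)
    (hβ : ContinuousOn β s) (hf : ContinuousOn (Function.uncurry f) (stripOver α β s)) (x : ℝ) :
    ContinuousOn (clampedField f α β · x) s :=
  hf.comp (continuousOn_id.prodMk (ContinuousOn.sup hα (continuousOn_const.inf hβ)))
    fun t ht => ⟨ht, max_min_mem_Icc (hle t ht) x⟩

lemma exists_forall_norm_clampedField_le (hs : IsCompact s) (hle : ∀ t ∈ s, α t ≤ β t)
    (hα : ContinuousOn α s) (hβ : ContinuousOn β s)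
    (hf : ContinuousOn (Function.uncurry f) (stripOver α β s))
    (hlip : ∀ t ∈ s, LipschitzOnWith K (f t) (Icc (α t) (β t))) :
    ∃ L, ∀ t ∈ s, ∀ x, ‖clampedField f α β t x‖ ≤ L := by
  have hfα : ContinuousOn (fun t => f t (α t)) s :=
    hf.comp (continuousOn_id.prodMk hα) fun t ht => ⟨ht, le_rfl, hle t ht⟩
  obtain ⟨L, hL⟩ := hs.exists_bound_of_continuousOn
    (hfα.norm.add (continuousOn_const.mul (hβ.sub hα) : ContinuousOn (fun t => K * (β t - α t)) s))
  refine ⟨L, fun t ht x => ?_⟩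
  set y := max (α t) (min x (β t))
  have hy : y ∈ Icc (α t) (β t) := max_min_mem_Icc (hle t ht) x
  calc ‖f t y‖ ≤ ‖f t (α t)‖ + dist (f t y) (f t (α t)) := norm_le_norm_add_norm_sub' _ _
    _ ≤ ‖f t (α t)‖ + K * dist y (α t) := by
      gcongr; exact (hlip t ht).dist_le_mul _ hy _ (left_mem_Icc.2 (hle t ht))
    _ ≤ ‖f t (α t)‖ + K * (β t - α t) := by
      gcongr; exact Real.dist_le_of_mem_Icc hy (left_mem_Icc.2 (hle t ht))
    _ ≤ L := (le_abs_self _).trans (hL t ht)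

end ClampedField

section HalfLine

variable {f : ℝ → ℝ → ℝ} {α β : ℝ → ℝ} {b : ℝ} {γ : ℕ → ℝ → ℝ}

lemma Icc_sub_natCast_subset {n m : ℕ} (hnm : n ≤ m) : Icc (b - n) b ⊆ Icc (b - m) b :=
  Icc_subset_Icc_left (by gcongr)

lemma uniformCauchySeqOn_of_isIntegralCurveOn_Icc
    (hanti : ∀ t ≤ b, AntitoneOn (f t) (Icc (α t) (β t)))
    (hwidth : Tendsto (fun t => β t - α t) atBot (𝓝 0))
    (hγ : ∀ n : ℕ, IsIntegralCurveOn (γ n) f (Icc (b - n) b))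
    (hmem : ∀ n : ℕ, ∀ t ∈ Icc (b - n) b, γ n t ∈ Icc (α t) (β t)) (N : ℕ) :
    UniformCauchySeqOn γ atTop (Icc (b - N) b) := by
  have dist_le : ∀ n m : ℕ, n ≤ m → ∀ t ∈ Icc (b - n) b,
      dist (γ n t) (γ m t) ≤ β (b - n) - α (b - n) := by
    intro n m hnm t ht
    have hsub := Icc_sub_natCast_subset (b := b) hnm
    have hstart : b - n ∈ Icc (b - n) b := by simp
    calc dist (γ n t) (γ m t) ≤ dist (γ n (b - n)) (γ m (b - n)) :=
          antitoneOn_abs_sub_of_isIntegralCurveOn (convex_Icc _ _) (fun s hs => hanti s hs.2)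
            (hγ n) (hmem n) ((hγ m).mono hsub) (fun s hs => hmem m s (hsub hs)) hstart ht ht.1
      _ ≤ β (b - n) - α (b - n) :=
          Real.dist_le_of_mem_Icc (hmem n _ hstart) (hmem m _ (hsub hstart))
  have start_tendsto : Tendsto (fun n : ℕ => b - (n : ℝ)) atTop atBot :=
    tendsto_atBot_add_const_left _ b (tendsto_neg_atTop_atBot.comp tendsto_natCast_atTop_atTop)
  exact uniformCauchySeqOn_of_dist_le_tendsto_zero
    (fun n m hNn hnm t ht => dist_le n m hnm t (Icc_sub_natCast_subset hNn ht))
    (hwidth.comp start_tendsto)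

lemma mem_Icc_of_tendstoUniformlyOn {γ₀ : ℝ → ℝ}
    (hmem : ∀ n : ℕ, ∀ t ∈ Icc (b - n) b, γ n t ∈ Icc (α t) (β t))
    (hlim : ∀ N : ℕ, TendstoUniformlyOn γ γ₀ atTop (Icc (b - N) b)) :
    ∀ t ≤ b, γ₀ t ∈ Icc (α t) (β t) := by
  intro t ht
  obtain ⟨N, hN⟩ := exists_nat_ge (b - t)
  have htN : t ∈ Icc (b - N) b := ⟨by linarith, ht⟩
  refine isClosed_Icc.mem_of_tendsto ((hlim N).tendsto_at htN) ?_
  filter_upwards [eventually_ge_atTop N] with n hn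
  exact hmem n t (Icc_sub_natCast_subset hn htN)

lemma isIntegralCurveOn_Iio_of_tendstoUniformlyOn {γ₀ : ℝ → ℝ}
    (hlip : ∀ a, ∃ K, ∀ t ∈ Icc a b, LipschitzOnWith K (f t) (Icc (α t) (β t)))
    (hγ : ∀ n : ℕ, IsIntegralCurveOn (γ n) f (Icc (b - n) b))
    (hmem : ∀ n : ℕ, ∀ t ∈ Icc (b - n) b, γ n t ∈ Icc (α t) (β t))
    (hlim : ∀ N : ℕ, TendstoUniformlyOn γ γ₀ atTop (Icc (b - N) b)) :
    IsIntegralCurveOn γ₀ f (Iio b) := by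
  intro t ht
  obtain ⟨N, hN⟩ := exists_nat_gt (b - t)
  obtain ⟨K, hK⟩ := hlip (b - N)
  refine (hasDerivAt_of_tendstoUniformlyOn_of_lipschitzOnWith (l := atTop) isOpen_Ioo
    (fun s hs => hK s (Ioo_subset_Icc_self hs)) ?_
    (fun s hs => mem_Icc_of_tendstoUniformlyOn hmem hlim s hs.2.le)
    ((hlim N).mono Ioo_subset_Icc_self)
    (show t ∈ Ioo (b - N) b from ⟨by linarith, ht⟩)).hasDerivWithinAt
  filter_upwards [eventually_ge_atTop N] with n hn
  have hsub : Ioo (b - N) b ⊆ Icc (b - n) b :=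
    Ioo_subset_Icc_self.trans (Icc_sub_natCast_subset hn)
  exact ⟨(hγ n).mono hsub, fun s hs => hmem n s (hsub hs)⟩

end HalfLine

/-- `α` and `β` are the strict lower and upper fences of a funnel of `x' = f t x` over `s`:
solutions can enter the strip between their graphs, but cannot leave it as `t` increases. -/
structure IsFunnelOn (f : ℝ → ℝ → ℝ) (α β : ℝ → ℝ) (s : Set ℝ) : Prop where
  le : ∀ t ∈ s, α t ≤ β t
  differentiableAt_lower : ∀ t ∈ s, DifferentiableAt ℝ α t
  differentiableAt_upper : ∀ t ∈ s, DifferentiableAt ℝ β t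
  deriv_lower_lt : ∀ t ∈ s, deriv α t < f t (α t)
  lt_deriv_upper : ∀ t ∈ s, f t (β t) < deriv β t

namespace IsFunnelOn

variable {f : ℝ → ℝ → ℝ} {α β : ℝ → ℝ} {s s' : Set ℝ} {a b : ℝ}

lemma mono (h : IsFunnelOn f α β s) (hs : s' ⊆ s) : IsFunnelOn f α β s' where
  le t ht := h.le t (hs ht)
  differentiableAt_lower t ht := h.differentiableAt_lower t (hs ht)
  differentiableAt_upper t ht := h.differentiableAt_upper t (hs ht)
  deriv_lower_lt t ht := h.deriv_lower_lt t (hs ht)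
  lt_deriv_upper t ht := h.lt_deriv_upper t (hs ht)

lemma continuousOn_lower (h : IsFunnelOn f α β s) : ContinuousOn α s := fun t ht =>
  (h.differentiableAt_lower t ht).continuousAt.continuousWithinAt

lemma continuousOn_upper (h : IsFunnelOn f α β s) : ContinuousOn β s := fun t ht =>
  (h.differentiableAt_upper t ht).continuousAt.continuousWithinAt

lemma mem_Icc_of_isIntegralCurveOn_clampedField (h : IsFunnelOn f α β (Icc a b)) {γ : ℝ → ℝ}
    (hγ : IsIntegralCurveOn γ (clampedField f α β) (Icc a b)) (hγa : γ a ∈ Icc (α a) (β a)) :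
    ∀ t ∈ Icc a b, γ t ∈ Icc (α t) (β t) := by
  have hγ_right : ∀ t ∈ Ico a b, HasDerivWithinAt γ (clampedField f α β t (γ t)) (Ici t) t :=
    fun t ht => (hγ t ⟨ht.1, ht.2.le⟩).mono_of_mem_nhdsWithin
      (mem_of_superset (Icc_mem_nhdsGE ht.2) (Icc_subset_Icc_left ht.1))
  have lower : ∀ ⦃t⦄, t ∈ Icc a b → α t ≤ γ t := by
    refine image_le_of_deriv_right_lt_deriv_boundary' h.continuousOn_lower
      (fun t ht => (h.differentiableAt_lower t ⟨ht.1, ht.2.le⟩).hasDerivAt.hasDerivWithinAt)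
      hγa.1 hγ.continuousOn hγ_right fun t ht heq => ?_
    have ht' := Ico_subset_Icc_self ht
    rw [← heq, clampedField_of_mem_Icc ⟨le_rfl, h.le t ht'⟩]
    exact h.deriv_lower_lt t ht'
  have upper : ∀ ⦃t⦄, t ∈ Icc a b → γ t ≤ β t := by
    refine image_le_of_deriv_right_lt_deriv_boundary' hγ.continuousOn hγ_right hγa.2
      h.continuousOn_upper
      (fun t ht => (h.differentiableAt_upper t ⟨ht.1, ht.2.le⟩).hasDerivAt.hasDerivWithinAt)
      fun t ht heq => ?_
    have ht' := Ico_subset_Icc_self ht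
    rw [heq, clampedField_of_mem_Icc ⟨h.le t ht', le_rfl⟩]
    exact h.lt_deriv_upper t ht'
  exact fun t ht => ⟨lower ht, upper ht⟩

lemma exists_isIntegralCurveOn_Icc (h : IsFunnelOn f α β (Icc a b)) (hab : a ≤ b)
    (hf : ContinuousOn (Function.uncurry f) (stripOver α β (Icc a b))) {K : NNReal}
    (hlip : ∀ t ∈ Icc a b, LipschitzOnWith K (f t) (Icc (α t) (β t))) :
    ∃ γ, IsIntegralCurveOn γ f (Icc a b) ∧ ∀ t ∈ Icc a b, γ t ∈ Icc (α t) (β t) := by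
  obtain ⟨L, hL⟩ := exists_forall_norm_clampedField_le isCompact_Icc h.le h.continuousOn_lower
    h.continuousOn_upper hf hlip
  obtain ⟨γ, hγa, hγ⟩ := exists_isIntegralCurveOn_Icc_of_lipschitzWith_of_norm_le hab
    (fun t ht => lipschitzWith_clampedField (h.le t ht) (hlip t ht))
    (continuousOn_clampedField h.le h.continuousOn_lower h.continuousOn_upper hf) hL (α a)
  have hmem := h.mem_Icc_of_isIntegralCurveOn_clampedField hγ
    ⟨hγa.ge, hγa.trans_le (h.le a ⟨le_rfl, hab⟩)⟩
  refine ⟨γ, fun t ht => ?_, hmem⟩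
  rw [← clampedField_of_mem_Icc (f := f) (hmem t ht)]
  exact hγ t ht

theorem exists_isIntegralCurveOn_Iio (h : IsFunnelOn f α β (Iic b))
    (hf : ContinuousOn (Function.uncurry f) (stripOver α β (Iic b)))
    (hlip : ∀ a, ∃ K, ∀ t ∈ Icc a b, LipschitzOnWith K (f t) (Icc (α t) (β t)))
    (hanti : ∀ t ≤ b, AntitoneOn (f t) (Icc (α t) (β t)))
    (hwidth : Tendsto (fun t => β t - α t) atBot (𝓝 0)) :
    ∃ γ, IsIntegralCurveOn γ f (Iio b) ∧ ∀ t ≤ b, γ t ∈ Icc (α t) (β t) := by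
  have approximant : ∀ n : ℕ, ∃ γ, IsIntegralCurveOn γ f (Icc (b - n) b) ∧
      ∀ t ∈ Icc (b - n) b, γ t ∈ Icc (α t) (β t) := by
    intro n
    obtain ⟨K, hK⟩ := hlip (b - n)
    exact (h.mono Icc_subset_Iic_self).exists_isIntegralCurveOn_Icc (by simp)
      (hf.mono fun p hp => ⟨hp.1.2, hp.2⟩) hK
  choose γ hγ hmem using approximant
  obtain ⟨γ₀, hlim⟩ := exists_forall_tendstoUniformlyOn_of_uniformCauchySeqOn
    (uniformCauchySeqOn_of_isIntegralCurveOn_Icc hanti hwidth hγ hmem)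
  exact ⟨γ₀, isIntegralCurveOn_Iio_of_tendstoUniformlyOn hlip hγ hmem hlim,
    mem_Icc_of_tendstoUniformlyOn hmem hlim⟩

end IsFunnelOn

/-- The right-hand side of the inner equation `dη/du = 1 / (η + u²)`; it is `0` on the parabola
`η = -u²`. -/
noncomputable def innerField (u η : ℝ) : ℝ := 1 / (η + u ^ 2)

section InnerField

variable {u : ℝ}

lemma antitoneOn_innerField (u : ℝ) : AntitoneOn (innerField u) {η | 0 < η + u ^ 2} :=
  fun _ hx _ _ hxy => one_div_le_one_div_of_le hx (add_le_add_left hxy _)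

lemma lipschitzOnWith_innerField {c : ℝ} (hc : 0 < c) (u : ℝ) :
    LipschitzOnWith (Real.toNNReal (1 / c ^ 2)) (innerField u) {η | c ≤ η + u ^ 2} := by
  refine LipschitzOnWith.of_dist_le_mul fun x hx y hy => ?_
  have hx₀ : 0 < x + u ^ 2 := hc.trans_le hx
  have hy₀ : 0 < y + u ^ 2 := hc.trans_le hy
  have hdiff : innerField u x - innerField u y = (y - x) / ((x + u ^ 2) * (y + u ^ 2)) := by
    unfold innerField; field_simp; ring
  calc dist (innerField u x) (innerField u y) = |y - x| / ((x + u ^ 2) * (y + u ^ 2)) := by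
        rw [Real.dist_eq, hdiff, abs_div, abs_of_pos (mul_pos hx₀ hy₀)]
    _ ≤ |y - x| / (c * c) := by gcongr <;> assumption
    _ = Real.toNNReal (1 / c ^ 2) * dist x y := by
        rw [Real.coe_toNNReal _ (by positivity), dist_comm, Real.dist_eq]; ring

lemma continuousOn_uncurry_innerField :
    ContinuousOn (Function.uncurry innerField) {p | 0 < p.2 + p.1 ^ 2} := by
  unfold innerField Function.uncurry
  exact continuousOn_const.div (by fun_prop) fun p hp => hp.ne'

variable {η : ℝ → ℝ}

lemma hasDerivAt_add_sq (h : HasDerivAt η (innerField u (η u)) u) :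
    HasDerivAt (fun x => η x + x ^ 2) (1 / (η u + u ^ 2) + 2 * u) u :=
  (h.fun_add (hasDerivAt_pow 2 u)).congr_deriv (by simp [innerField])

/-- With `1 / 0 = 0` the equation allows a point on the parabola, where `η + u²` has slope
`2a < 0`; then `η + u²` is small and positive just to the left, where its slope `1 / (η + u²) + 2u`
blows up. -/
lemma add_sq_ne_zero_of_hasDerivAt {a : ℝ} (ha : a < 0)
    (hη : ∀ᶠ u in 𝓝 a, HasDerivAt η (innerField u (η u)) u) : η a + a ^ 2 ≠ 0 := by
  intro hzero
  set g : ℝ → ℝ := fun u => η u + u ^ 2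
  have hg : ∀ᶠ u in 𝓝 a, HasDerivAt g (1 / g u + 2 * u) u := hη.mono fun u => hasDerivAt_add_sq
  have hga : HasDerivAt g (2 * a) a := by simpa [g, hzero] using hg.self_of_nhds
  have pos_left : ∀ᶠ u in 𝓝[<] a, 0 < g u := by
    have hsign := eventually_nhdsWithin_sign_eq_of_deriv_neg (f := g) (x₀ := a)
      (by rw [hga.deriv]; linarith) hzero
    filter_upwards [hsign.filter_mono nhdsWithin_le_nhds, self_mem_nhdsWithin] with u hu hua
    rwa [sign_pos (sub_pos.2 hua), sign_eq_one_iff] at hu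
  have tendsto_zero : Tendsto g (𝓝[<] a) (𝓝[>] 0) := by
    refine tendsto_nhdsWithin_iff.2 ⟨?_, pos_left⟩
    exact hzero ▸ hga.continuousAt.tendsto.mono_left nhdsWithin_le_nhds
  have deriv_atTop : Tendsto (deriv g) (𝓝[<] a) atTop := by
    have hlin : Tendsto (fun u : ℝ => 2 * u) (𝓝[<] a) (𝓝 (2 * a)) :=
      (continuous_const_mul (2 : ℝ)).continuousAt.tendsto.mono_left nhdsWithin_le_nhds
    refine (tendsto_zero.inv_tendsto_nhdsGT_zero.atTop_add hlin).congr' ?_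
    filter_upwards [hg.filter_mono nhdsWithin_le_nhds] with u hu
    simp [hu.deriv]
  exact not_differentiableWithinAt_of_deriv_tendsto_atTop_Iio g deriv_atTop
    hga.differentiableAt.differentiableWithinAt

lemma exists_lt_add_sq_nonneg {b : ℝ} (hη : ∀ u < b, HasDerivAt η (innerField u (η u)) u) :
    ∃ u < b, 0 ≤ η u + u ^ 2 := by
  by_contra! hneg
  have hanti : AntitoneOn η (Iio b) :=
    antitoneOn_of_hasDerivWithinAt_nonpos (convex_Iio b)
      (fun u hu => (hη u hu).continuousAt.continuousWithinAt)
      (fun u hu => (hη u (interior_subset (s := Iio b) hu)).hasDerivWithinAt)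
      fun u hu => (one_div_neg.2 (hneg u (interior_subset (s := Iio b) hu))).le
  have sq_atTop : Tendsto (fun u : ℝ => η (b - 1) + u ^ 2) atBot atTop :=
    tendsto_atTop_add_const_left _ _ <|
      ((tendsto_pow_atTop two_ne_zero).comp tendsto_abs_atBot_atTop).congr sq_abs
  obtain ⟨u, hpos, hu⟩ :=
    ((sq_atTop.eventually_gt_atTop 0).and (eventually_le_atBot (b - 1))).exists
  have hub : u < b := by linarith
  linarith [hneg u hub, hanti hub (show b - 1 < b by linarith) hu]

lemma add_sq_pos_of_hasDerivAt {b : ℝ} (hb : b ≤ 0)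
    (hη : ∀ u < b, HasDerivAt η (innerField u (η u)) u) : ∀ u < b, 0 < η u + u ^ 2 := by
  have ne_zero : ∀ u < b, η u + u ^ 2 ≠ 0 := fun u hu =>
    add_sq_ne_zero_of_hasDerivAt (hu.trans_le hb) ((eventually_lt_nhds hu).mono hη)
  obtain ⟨v, hv, hv_nonneg⟩ := exists_lt_add_sq_nonneg hη
  have hcont : ContinuousOn (fun u => η u + u ^ 2) (Iio b) := fun u hu =>
    (hasDerivAt_add_sq (hη u hu)).continuousAt.continuousWithinAt
  intro u hu
  by_contra! hu_nonpos
  obtain ⟨x, hx, hx₀⟩ := isPreconnected_Iio.intermediate_value hu hv hcont ⟨hu_nonpos, hv_nonneg⟩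
  exact ne_zero x hx hx₀

end InnerField

/-- The expansion `-u² - 1/(2u) - 1/(8u⁴)` of the distinguished solution, followed by a term
`-c/u⁷` with adjustable coefficient. The solution itself has `c = 5/32` there, so `c = 0` and
`c = 1` bound it from below and above. -/
noncomputable def parabolaExpansion (c u : ℝ) : ℝ :=
  -u ^ 2 - 1 / (2 * u) - 1 / (8 * u ^ 4) - c / u ^ 7

section ParabolaExpansion

variable {c u : ℝ}

lemma hasDerivAt_parabolaExpansion (c : ℝ) (hu : u ≠ 0) :
    HasDerivAt (parabolaExpansion c)
      (-2 * u + 1 / (2 * u ^ 2) + 1 / (2 * u ^ 5) + 7 * c / u ^ 8) u := by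
  have hlin : HasDerivAt (fun x : ℝ => 2 * x) 2 u := by
    simpa using (hasDerivAt_id u).const_mul 2
  have h := (((hasDerivAt_pow 2 u).fun_neg.fun_sub
    ((hasDerivAt_const u (1 : ℝ)).fun_div hlin (by positivity))).fun_sub
    ((hasDerivAt_const u (1 : ℝ)).fun_div ((hasDerivAt_pow 4 u).const_mul 8)
      (by positivity))).fun_sub
    ((hasDerivAt_const u c).fun_div (hasDerivAt_pow 7 u) (by positivity))
  refine h.congr_deriv ?_
  field_simp
  ring

lemma parabolaExpansion_add_sq (c : ℝ) (hu : u ≠ 0) :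
    parabolaExpansion c u + u ^ 2 = -(4 * u ^ 6 + u ^ 3 + 8 * c) / (8 * u ^ 7) := by
  unfold parabolaExpansion
  field_simp
  ring

lemma deriv_parabolaExpansion_sub_innerField (hu : u ≠ 0)
    (hden : 4 * u ^ 6 + u ^ 3 + 8 * c ≠ 0) :
    deriv (parabolaExpansion c) u - innerField u (parabolaExpansion c u) =
      ((5 - 32 * c) * u ^ 9 + (1 + 64 * c) * u ^ 6 + 22 * c * u ^ 3 + 112 * c ^ 2) /
        (2 * u ^ 8 * (4 * u ^ 6 + u ^ 3 + 8 * c)) := by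
  rw [(hasDerivAt_parabolaExpansion c hu).deriv, innerField, parabolaExpansion_add_sq c hu]
  generalize hX : 4 * u ^ 6 + u ^ 3 + 8 * c = X at hden ⊢
  field_simp
  rw [← hX]
  ring

lemma cube_le_neg_one (hu : u ≤ -1) : u ^ 3 ≤ -1 :=
  (Odd.strictMono_pow (R := ℝ) (n := 3) (by decide)).monotone hu |>.trans_eq (by norm_num)

lemma four_mul_pow_six_add_pos (hc : 0 ≤ c) (hu : u ≤ -1) : 0 < 4 * u ^ 6 + u ^ 3 + 8 * c := by
  nlinarith [cube_le_neg_one hu]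

lemma parabolaExpansion_add_sq_pos (hc : 0 ≤ c) (hu : u ≤ -1) :
    0 < parabolaExpansion c u + u ^ 2 := by
  rw [parabolaExpansion_add_sq c (by linarith)]
  have hpow : u ^ 7 < 0 := Odd.pow_neg (by decide) (by linarith)
  exact div_pos_of_neg_of_neg (by linarith [four_mul_pow_six_add_pos hc hu]) (by linarith)

lemma deriv_parabolaExpansion_zero_lt (hu : u ≤ -1) :
    deriv (parabolaExpansion 0) u < innerField u (parabolaExpansion 0 u) := by
  have hden := four_mul_pow_six_add_pos le_rfl hu
  have hu₀ : u ≠ 0 := by linarith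
  rw [← sub_neg, deriv_parabolaExpansion_sub_innerField hu₀ hden.ne']
  refine div_neg_of_neg_of_pos ?_ (by positivity)
  nlinarith [cube_le_neg_one hu, sq_nonneg (u ^ 3)]

lemma lt_deriv_parabolaExpansion_one (hu : u ≤ -1) :
    innerField u (parabolaExpansion 1 u) < deriv (parabolaExpansion 1) u := by
  have hden := four_mul_pow_six_add_pos zero_le_one hu
  have hu₀ : u ≠ 0 := by linarith
  rw [← sub_pos, deriv_parabolaExpansion_sub_innerField hu₀ hden.ne']
  refine div_pos ?_ (by positivity)
  nlinarith [cube_le_neg_one hu, sq_nonneg (u ^ 3)]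

lemma parabolaExpansion_sub_parabolaExpansion (c d u : ℝ) :
    parabolaExpansion d u - parabolaExpansion c u = (c - d) / u ^ 7 := by
  unfold parabolaExpansion
  ring

lemma isFunnelOn_parabolaExpansion :
    IsFunnelOn innerField (parabolaExpansion 0) (parabolaExpansion 1) (Iic (-1)) where
  le u (hu : u ≤ -1) := by
    have hpow : u ^ 7 < 0 := Odd.pow_neg (by decide) (by linarith)
    rw [← sub_nonneg, parabolaExpansion_sub_parabolaExpansion]
    exact (div_pos_of_neg_of_neg (by norm_num) hpow).le
  differentiableAt_lower u (hu : u ≤ -1) :=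
    (hasDerivAt_parabolaExpansion 0 (by linarith)).differentiableAt
  differentiableAt_upper u (hu : u ≤ -1) :=
    (hasDerivAt_parabolaExpansion 1 (by linarith)).differentiableAt
  deriv_lower_lt _ := deriv_parabolaExpansion_zero_lt
  lt_deriv_upper _ := lt_deriv_parabolaExpansion_one

lemma tendsto_parabolaExpansion_add_sq (c : ℝ) :
    Tendsto (fun u => parabolaExpansion c u + u ^ 2) atBot (𝓝 0) := by
  have hpoly : Tendsto (fun x : ℝ => -(1 / 2) * x - 1 / 8 * x ^ 4 - c * x ^ 7) (𝓝 0) (𝓝 0) :=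
    Continuous.tendsto' (by fun_prop) _ _ (by simp)
  refine (hpoly.comp tendsto_inv_atBot_zero).congr fun u => ?_
  simp only [Function.comp_apply, parabolaExpansion]
  ring

end ParabolaExpansion

lemma add_sq_pos_of_parabolaExpansion_zero_le {u x : ℝ} (hu : u ≤ -1)
    (hx : parabolaExpansion 0 u ≤ x) : 0 < x + u ^ 2 :=
  (parabolaExpansion_add_sq_pos le_rfl hu).trans_le (add_le_add_left hx _)

lemma exists_lipschitzOnWith_innerField_Icc (a : ℝ) :
    ∃ K, ∀ u ∈ Icc a (-1), LipschitzOnWith K (innerField u)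
      (Icc (parabolaExpansion 0 u) (parabolaExpansion 1 u)) := by
  have hcont : ContinuousOn (fun u => parabolaExpansion 0 u + u ^ 2) (Icc a (-1)) :=
    (isFunnelOn_parabolaExpansion.continuousOn_lower.mono Icc_subset_Iic_self).add (by fun_prop)
  obtain ⟨c, hc, hle⟩ := isCompact_Icc.exists_forall_le' hcont
    fun u hu => parabolaExpansion_add_sq_pos le_rfl hu.2
  exact ⟨_, fun u hu => (lipschitzOnWith_innerField hc u).mono fun x hx =>
    (hle u hu).trans (add_le_add_left hx.1 _)⟩

theorem exists_isIntegralCurveOn_innerField :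
    ∃ η, IsIntegralCurveOn η innerField (Iio (-1)) ∧
      ∀ u ≤ -1, η u ∈ Icc (parabolaExpansion 0 u) (parabolaExpansion 1 u) := by
  refine isFunnelOn_parabolaExpansion.exists_isIntegralCurveOn_Iio
    (continuousOn_uncurry_innerField.mono fun p hp =>
      add_sq_pos_of_parabolaExpansion_zero_le hp.1 hp.2.1)
    exists_lipschitzOnWith_innerField_Icc
    (fun u hu => (antitoneOn_innerField u).mono fun x hx =>
      add_sq_pos_of_parabolaExpansion_zero_le hu hx.1) ?_
  simpa using (tendsto_parabolaExpansion_add_sq 1).sub (tendsto_parabolaExpansion_add_sq 0)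

lemma tendsto_add_sq_of_mem_Icc_parabolaExpansion {η : ℝ → ℝ}
    (hη : ∀ u ≤ -1, η u ∈ Icc (parabolaExpansion 0 u) (parabolaExpansion 1 u)) :
    Tendsto (fun u => η u + u ^ 2) atBot (𝓝 0) := by
  refine tendsto_of_tendsto_of_tendsto_of_le_of_le' (tendsto_parabolaExpansion_add_sq 0)
    (tendsto_parabolaExpansion_add_sq 1) ?_ ?_ <;>
  filter_upwards [eventually_le_atBot (-1)] with u hu
  · exact add_le_add_left (hη u hu).1 _
  · exact add_le_add_left (hη u hu).2 _

lemma abs_sub_le_of_mem_Icc_parabolaExpansion {u x : ℝ} (hu : u < 0)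
    (hx : x ∈ Icc (parabolaExpansion 0 u) (parabolaExpansion 1 u)) :
    |x - (-u ^ 2 - 1 / (2 * u) - 1 / (8 * u ^ 4))| ≤ 1 / |u| ^ 7 := by
  have hzero : parabolaExpansion 0 u = -u ^ 2 - 1 / (2 * u) - 1 / (8 * u ^ 4) := by
    simp [parabolaExpansion]
  calc |x - (-u ^ 2 - 1 / (2 * u) - 1 / (8 * u ^ 4))| = x - parabolaExpansion 0 u := by
        rw [← hzero, abs_of_nonneg (sub_nonneg.2 hx.1)]
    _ ≤ parabolaExpansion 1 u - parabolaExpansion 0 u := sub_le_sub_right hx.2 _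
    _ = 1 / |u| ^ 7 := by
        rw [parabolaExpansion_sub_parabolaExpansion, abs_of_neg hu, Odd.neg_pow (by decide)]
        simp [div_neg, neg_div]

theorem eqOn_of_hasDerivAt_innerField_of_tendsto {b : ℝ} (hb : b ≤ 0) {η ξ : ℝ → ℝ}
    (hη : ∀ u < b, HasDerivAt η (innerField u (η u)) u)
    (hη_lim : Tendsto (fun u => η u + u ^ 2) atBot (𝓝 0))
    (hξ : ∀ u < b, HasDerivAt ξ (innerField u (ξ u)) u)
    (hξ_lim : Tendsto (fun u => ξ u + u ^ 2) atBot (𝓝 0)) : EqOn η ξ (Iio b) :=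
  eqOn_Iio_of_isIntegralCurveOn_of_tendsto_sub (fun u _ => antitoneOn_innerField u)
    (fun u hu => (hη u hu).hasDerivWithinAt) (add_sq_pos_of_hasDerivAt hb hη)
    (fun u hu => (hξ u hu).hasDerivWithinAt) (add_sq_pos_of_hasDerivAt hb hξ)
    (by simpa using hη_lim.sub hξ_lim)

/-- The Riccati-type inner equation dη/du = 1/(η + u²) has a unique solution
defined on an interval (-∞, u₁) approaching the parabola η = -u² as u → -∞,
with the asymptotic expansion η(u) = -u² - 1/(2u) - 1/(8u⁴) + O(1/u⁷). -/
theorem stmt5 : ∃ (u₁ : ℝ) (η : ℝ → ℝ),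
    (∀ u < u₁, HasDerivAt η (1 / (η u + u ^ 2)) u ∧ 0 < η u + u ^ 2) ∧
    Filter.Tendsto (fun u => η u + u ^ 2) Filter.atBot (nhds 0) ∧
    (∃ C R : ℝ, 0 < C ∧ 0 < R ∧ ∀ u ≤ -R,
      |η u - (-u ^ 2 - 1/(2*u) - 1/(8*u ^ 4))| ≤ C / |u| ^ 7) ∧
    (∀ (u₁' : ℝ) (η' : ℝ → ℝ),
      (∀ u < u₁', HasDerivAt η' (1 / (η' u + u ^ 2)) u) →
      Filter.Tendsto (fun u => η' u + u ^ 2) Filter.atBot (nhds 0) →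
      ∀ u < min u₁ u₁', η' u = η u) := by
  obtain ⟨η, hη, hmem⟩ := exists_isIntegralCurveOn_innerField
  have hderiv : ∀ u < -1, HasDerivAt η (innerField u (η u)) u := fun u hu =>
    (hη u hu).hasDerivAt (Iio_mem_nhds hu)
  have hlim := tendsto_add_sq_of_mem_Icc_parabolaExpansion hmem
  refine ⟨-1, η, fun u hu => ⟨hderiv u hu, ?_⟩, hlim, ⟨1, 1, one_pos, one_pos, fun u hu => ?_⟩,
    fun u₁' η' hη' hlim' => ?_⟩
  · exact add_sq_pos_of_parabolaExpansion_zero_le hu.le (hmem u hu.le).1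
  · exact abs_sub_le_of_mem_Icc_parabolaExpansion (by linarith) (hmem u hu)
  · have hmin : min (-1) u₁' ≤ 0 := (min_le_left _ _).trans (by norm_num)
    exact eqOn_of_hasDerivAt_innerField_of_tendsto hmin
      (fun u hu => hη' u (hu.trans_le (min_le_right _ _))) hlim'
      (fun u hu => hderiv u (hu.trans_le (min_le_left _ _))) hlim
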